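/- (Unitary 2-designs induce channel [2,k]-designs.) Let d ≥ 1, k ≥ 1 with D = dk ≥ 2, and let (U_m)_{m<M} (M ≥ 1) be a unitary 2-design in U(Fin d × Fin k); fix the environment state 0 ∈ Fin k. Then for all a₁, a₂, b₁, b₂, i₁, i₂, j₁, j₂ ∈ Fin d, (1/M) Σ_{m<M} (1/d²) Σ_{l₁, l₂ ∈ Fin k} (U_m)_{(i₁,l₁),(a₁,0)} (U_m)_{(i₂,l₂),(a₂,0)} conj((U_m)_{(j₁,l₁),(b₁,0)}) conj((U_m)_{(j₂,l₂),(b₂,0)}) = [ k² δ_{a₁b₁}δ_{a₂b₂}δ_{i₁j₁}δ_{i₂j₂} + k δ_{a₁b₂}δ_{a₂b₁}δ_{i₁j₂}δ_{i₂j₁} − (k²/D) δ_{a₁b₂}δ_{a₂b₁}δ_{i₁j₁}δ_{i₂j₂} − (k/D) δ_{a₁b₁}δ_{a₂b₂}δ_{i₁j₂}δ_{i₂j₁} ] / (d²(D² − 1)); that is, the channels Φ_m(ρ) = Tr_E[U_m(ρ⊗|0⟩⟨0|)U_m†] have two-copy Choi average equal to the Haar two-copy Choi average, so they form a channel [2,k]-design.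 -/

import Mathlib

open MeasureTheory Matrix

noncomputable instance Matrix.measurableSpace {m n R : Type*} [MeasurableSpace R] :
    MeasurableSpace (Matrix m n R) := inferInstanceAs (MeasurableSpace (m → n → R))

instance Matrix.borelSpace {m n R : Type*} [Countable m] [Countable n]
    [TopologicalSpace R] [MeasurableSpace R] [BorelSpace R] [SecondCountableTopology R] :
    BorelSpace (Matrix m n R) := inferInstanceAs (BorelSpace (m → n → R))

instance {ι : Type*} [Fintype ι] [DecidableEq ι] :
    BorelSpace (Matrix.unitaryGroup ι ℂ) := Subtype.borelSpace _

/-- Kronecker delta with values in `ℂ`. -/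
noncomputable def δ {α : Type*} [DecidableEq α] (x y : α) : ℂ := if x = y then 1 else 0

/-!
A unitary 2-design `(U_m)` averages `U ⊗ U X (U ⊗ U)⁻¹` to the Haar twirl of `X`, and every entry of
the two-copy Choi average is the partial trace over both environments of such an average, with `X` a
matrix unit. By invariance of the Haar measure the twirl commutes with all `V ⊗ V`, and the
commutant of these operators is spanned by the identity and the swap operator `F`. The two
coefficients are determined by the traces against `1` and `F`, which twirling preserves. Finally the
environment trace sends `1` to `k² • 1`, and sends `F` to `k` times the swap on the principal
systems.
-/

section Twirl

variable {G A E : Type*} [Group G] [MeasurableSpace G] [NormedRing A]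

/-- The twirl `∫ π(g) X π(g)⁻¹ dμ(g)` of `X` by a representation `π` in a normed algebra. -/
noncomputable def twirl [NormedSpace ℝ A] (μ : Measure G) (π : G →* A) (X : A) : A :=
  ∫ g, π g * X * π g⁻¹ ∂μ

variable [TopologicalSpace G] [IsTopologicalGroup G] [CompactSpace G] [BorelSpace G]
  {μ : Measure G} {π : G →* A}

theorem integrable_map_conj [IsFiniteMeasureOnCompacts μ] (hπ : Continuous π) (X : A) :
    Integrable (fun g ↦ π g * X * π g⁻¹) μ :=
  Continuous.integrable_of_hasCompactSupport
    ((hπ.mul continuous_const).mul (hπ.comp continuous_inv)) (.of_compactSpace _)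

variable [NormedAlgebra ℝ A]

theorem commute_twirl [IsFiniteMeasureOnCompacts μ] [μ.IsMulLeftInvariant] (hπ : Continuous π)
    (X : A) (h : G) : Commute (π h) (twirl μ π X) := by
  have conj_mul_left (g : G) :
      π h * (π g * X * π g⁻¹) = π (h * g) * X * π (h * g)⁻¹ * π h := by
    have inv_mul : π h⁻¹ * π h = 1 := by rw [← map_mul, inv_mul_cancel, map_one]
    simp only [_root_.mul_inv_rev, map_mul, mul_assoc, inv_mul, mul_one]
  calc π h * twirl μ π X
      = ∫ g, π (h * g) * X * π (h * g)⁻¹ * π h ∂μ := by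
        simp only [twirl, ← integral_const_mul_of_integrable (integrable_map_conj hπ X),
          conj_mul_left]
    _ = ∫ g, π g * X * π g⁻¹ * π h ∂μ :=
        integral_mul_left_eq_self (fun g ↦ π g * X * π g⁻¹ * π h) h
    _ = twirl μ π X * π h := integral_mul_const_of_integrable (integrable_map_conj hπ X)

theorem map_mul_twirl_of_commute [CompleteSpace A] [NormedAddCommGroup E] [NormedSpace ℝ E]
    [CompleteSpace E] [IsProbabilityMeasure μ] (hπ : Continuous π) (τ : A →L[ℝ] E)
    (hτ : ∀ a b, τ (a * b) = τ (b * a)) {C : A} (hC : ∀ g, Commute (π g) C) (X : A) :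
    τ (C * twirl μ π X) = τ (C * X) := by
  have tracial_conj (g : G) : τ (C * (π g * X * π g⁻¹)) = τ (C * X) := by
    calc τ (C * (π g * X * π g⁻¹)) = τ (π g * (C * X) * π g⁻¹) := by
          simp only [← mul_assoc, (hC g).eq]
      _ = τ (π g⁻¹ * π g * (C * X)) := by rw [hτ, mul_assoc]
      _ = τ (C * X) := by rw [← map_mul, inv_mul_cancel, map_one, one_mul]
  rw [twirl, ← integral_const_mul_of_integrable (integrable_map_conj hπ X),
    ← τ.integral_comp_comm ((integrable_map_conj hπ X).const_mul C)]
  simp [tracial_conj]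

end Twirl

section SwapMatrix

theorem δ_self {α : Type*} [DecidableEq α] (x : α) : δ x x = 1 := if_pos rfl

theorem δ_comm {α : Type*} [DecidableEq α] (x y : α) : δ x y = δ y x := by
  simp only [δ, eq_comm]

theorem δ_prodMk {α β : Type*} [DecidableEq α] [DecidableEq β] (x x' : α) (y y' : β) :
    δ (x, y) (x', y') = δ x x' * δ y y' := by
  simp only [δ, Prod.mk.injEq, ite_and, ite_mul, one_mul, zero_mul]

variable {ι : Type*} [DecidableEq ι]

variable (ι) in
/-- The swap operator `F (u ⊗ v) = v ⊗ u` on `ℂ^ι ⊗ ℂ^ι`. -/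
noncomputable def swapMatrix : Matrix (ι × ι) (ι × ι) ℂ :=
  Equiv.Perm.permMatrix ℂ (Equiv.prodComm ι ι)

theorem one_apply_eq_δ (p r : ι × ι) :
    (1 : Matrix (ι × ι) (ι × ι) ℂ) p r = δ p.1 r.1 * δ p.2 r.2 := by
  simp only [one_apply, δ, Prod.ext_iff, ite_and, ite_mul, one_mul, zero_mul]

theorem swapMatrix_apply (p r : ι × ι) : swapMatrix ι p r = δ p.1 r.2 * δ p.2 r.1 := by
  simp [swapMatrix, δ, Prod.ext_iff, PEquiv.toMatrix_apply, ← ite_and, and_comm]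

variable [Fintype ι]

theorem swapMatrix_mul_self : swapMatrix ι * swapMatrix ι = 1 := by
  rw [swapMatrix, ← permMatrix_mul]
  exact permMatrix_one

theorem trace_swapMatrix : (swapMatrix ι).trace = Fintype.card ι := by
  simp [trace, swapMatrix_apply, Fintype.sum_prod_type, δ]

theorem trace_single_eq_δ (q s : ι × ι) :
    (single q s (1 : ℂ)).trace = δ q.1 s.1 * δ q.2 s.2 := by
  rw [← mul_one (single q s (1 : ℂ)), trace_single_mul, one_smul, one_apply_eq_δ, δ_comm,
    δ_comm s.2]

theorem trace_swapMatrix_mul_single (q s : ι × ι) :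
    (swapMatrix ι * single q s (1 : ℂ)).trace = δ q.1 s.2 * δ q.2 s.1 := by
  rw [trace_mul_single, MulOpposite.op_one, one_smul, swapMatrix_apply, δ_comm, δ_comm s.2,
    mul_comm]

end SwapMatrix

section TensorSquare

open scoped Kronecker Matrix.Norms.L2Operator

variable {ι : Type*} [Fintype ι] [DecidableEq ι]

instance compactSpace_unitaryGroup : CompactSpace (unitaryGroup ι ℂ) := by
  refine isCompact_iff_compactSpace.mp (Metric.isCompact_of_isClosed_isBounded isClosed_unitary ?_)
  refine isBounded_iff_forall_norm_le.mpr ⟨‖(1 : Matrix ι ι ℂ)‖, fun V hV ↦ ?_⟩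
  simpa using (CStarRing.norm_mem_unitary_mul 1 hV).le

/-- The representation `V ↦ V ⊗ V` of the unitary group. -/
noncomputable def tensorSquare : unitaryGroup ι ℂ →* Matrix (ι × ι) (ι × ι) ℂ where
  toFun V := (V : Matrix ι ι ℂ) ⊗ₖ (V : Matrix ι ι ℂ)
  map_one' := one_kronecker_one
  map_mul' _ _ := mul_kronecker_mul _ _ _ _

theorem tensorSquare_apply (V : unitaryGroup ι ℂ) (p q : ι × ι) :
    tensorSquare V p q = V p.1 q.1 * V p.2 q.2 := rfl

theorem continuous_tensorSquare : Continuous (tensorSquare (ι := ι)) := by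
  refine continuous_matrix fun p q ↦ ?_
  exact (continuous_subtype_val.matrix_elem p.1 q.1).mul
    (continuous_subtype_val.matrix_elem p.2 q.2)

theorem commute_tensorSquare_swapMatrix (V : unitaryGroup ι ℂ) :
    Commute (tensorSquare V) (swapMatrix ι) := by
  ext p r
  rw [swapMatrix, PEquiv.mul_toMatrix_toPEquiv, PEquiv.toMatrix_toPEquiv_mul]
  exact mul_comm _ _

theorem permMatrix_mem_unitaryGroup (σ : Equiv.Perm ι) : σ.permMatrix ℂ ∈ unitaryGroup ι ℂ := by
  rw [mem_unitaryGroup_iff, star_eq_conjTranspose, conjTranspose_permMatrix, ← permMatrix_mul,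
    inv_mul_cancel, permMatrix_one]

theorem exists_unitary_apply_ne_zero {x y : ι} (hxy : x ≠ y) :
    ∃ V : unitaryGroup ι ℂ, V x x ≠ 0 ∧ V x y ≠ 0 := by
  -- The witness is `(3 + 4 I S) / 5`, with `S` the transposition matrix of `x` and `y`.
  set S := (Equiv.swap x y).permMatrix ℂ with hS
  have conjTranspose_S : Sᴴ = S := by rw [hS, conjTranspose_permMatrix, Equiv.swap_inv]
  have S_mul_S : S * S = 1 := by rw [hS, ← permMatrix_mul, Equiv.swap_mul_self, permMatrix_one]
  let V : Matrix ι ι ℂ := (3 / 5 : ℂ) • 1 + (4 / 5 * Complex.I) • S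
  have conjTranspose_V : Vᴴ = (3 / 5 : ℂ) • 1 - (4 / 5 * Complex.I) • S := by
    simp [V, conjTranspose_S, sub_eq_add_neg]
  have V_mem : V ∈ unitaryGroup ι ℂ := by
    rw [mem_unitaryGroup_iff, star_eq_conjTranspose, conjTranspose_V]
    simp only [V, add_mul, mul_sub, smul_mul_smul_comm, one_mul, mul_one, S_mul_S]
    match_scalars
    · linear_combination (-16 / 25) * Complex.I_mul_I
    · ring
  exact ⟨⟨V, V_mem⟩, by simp [V, S, PEquiv.toMatrix_apply, hxy.symm],
    by simp [V, S, PEquiv.toMatrix_apply, hxy]⟩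

section Commutant

variable {X : Matrix (ι × ι) (ι × ι) ℂ} (hX : ∀ V, Commute (tensorSquare V) X)
include hX

theorem apply_eq_zero_of_commute_tensorSquare {p r : ι × ι} (h : p ≠ r) (h' : p ≠ r.swap) :
    X p r = 0 := by
  -- Conjugation by `diag(1, …, I, …, 1)` scales the entry at `(p, r)` by `I` to the power of the
  -- difference between the multiplicities of each index in `p` and in `r`.
  let phase (x i : ι) : ℂ := if i = x then Complex.I else 1
  have phase_mem (x : ι) : diagonal (phase x) ∈ unitaryGroup ι ℂ := by
    rw [mem_unitaryGroup_iff, star_eq_conjTranspose, diagonal_conjTranspose,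
      diagonal_mul_diagonal, ← diagonal_one]
    congr 1 with i
    by_cases hi : i = x <;> simp [phase, hi]
  have phase_mul_apply (x : ι) :
      phase x p.1 * phase x p.2 * X p r = X p r * (phase x r.1 * phase x r.2) := by
    have := congr_fun₂ (hX ⟨_, phase_mem x⟩).eq p r
    simpa [tensorSquare, diagonal_kronecker_diagonal] using this
  by_contra entry_ne_zero
  have phase_eq (x : ι) : phase x p.1 * phase x p.2 = phase x r.1 * phase x r.2 :=
    mul_right_cancel₀ entry_ne_zero ((phase_mul_apply x).trans (mul_comm _ _))
  have h₁ := phase_eq p.1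
  have h₂ := phase_eq p.2
  simp only [phase] at h₁ h₂
  have I_ne_one : Complex.I ≠ 1 := by simp [Complex.ext_iff]
  have I_mul_I : Complex.I * Complex.I = -1 := Complex.I_mul_I
  grind

theorem apply_prodMap_of_commute_tensorSquare (σ : Equiv.Perm ι) (p r : ι × ι) :
    X (p.map σ σ) (r.map σ σ) = X p r := by
  have tensorSquare_perm : tensorSquare ⟨_, permMatrix_mem_unitaryGroup σ⟩ =
      Equiv.Perm.permMatrix ℂ (σ.prodCongr σ : Equiv.Perm (ι × ι)) := by
    ext p r
    simp [tensorSquare_apply, PEquiv.toMatrix_apply, Prod.ext_iff, ← ite_and, and_comm]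
  have := congr_fun₂ (hX ⟨_, permMatrix_mem_unitaryGroup σ⟩).eq p (r.map σ σ)
  rw [tensorSquare_perm, PEquiv.mul_toMatrix_toPEquiv, PEquiv.toMatrix_toPEquiv_mul] at this
  simpa [Prod.map] using this

theorem apply_diag_of_commute_tensorSquare {x y : ι} (hxy : x ≠ y) :
    X (x, x) (x, x) = X (x, y) (x, y) + X (y, x) (x, y) := by
  -- Compares the `((x, x), (x, y))` entries of `(V ⊗ V) X` and `X (V ⊗ V)`.
  obtain ⟨V, hVx, hVy⟩ := exists_unitary_apply_ne_zero hxy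
  have entry_eq := congr_fun₂ (hX V).eq (x, x) (x, y)
  simp only [mul_apply, tensorSquare_apply] at entry_eq
  rw [Fintype.sum_eq_add (x, y) (y, x) (by simp [hxy]), Fintype.sum_eq_single (x, x)] at entry_eq
  · refine mul_right_cancel₀ (mul_ne_zero hVx hVy) ?_
    linear_combination -entry_eq
  · intro p hp
    rw [apply_eq_zero_of_commute_tensorSquare hX hp.symm (by grind), zero_mul]
  · rintro p ⟨hp, hp'⟩
    rw [apply_eq_zero_of_commute_tensorSquare hX hp hp', mul_zero]

theorem apply_eq_apply_of_commute_tensorSquare {x y r₁ r₂ : ι} (hxy : x ≠ y) (hr : r₁ ≠ r₂) :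
    X (r₁, r₂) (r₁, r₂) = X (x, y) (x, y) ∧ X (r₂, r₁) (r₁, r₂) = X (y, x) (x, y) := by
  obtain ⟨σ, rfl, rfl⟩ := MulAction.is_two_pretransitive_iff.mp
    (Equiv.Perm.isMultiplyPretransitive ι 2) hxy hr
  exact ⟨apply_prodMap_of_commute_tensorSquare hX σ (x, y) (x, y),
    apply_prodMap_of_commute_tensorSquare hX σ (y, x) (x, y)⟩

theorem exists_eq_smul_one_add_smul_swapMatrix [Nontrivial ι] :
    ∃ a b : ℂ, X = a • 1 + b • swapMatrix ι := by
  obtain ⟨x, y, hxy⟩ := exists_pair_ne ι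
  refine ⟨X (x, y) (x, y), X (y, x) (x, y), ?_⟩
  ext p ⟨r₁, r₂⟩
  simp only [Matrix.add_apply, Matrix.smul_apply, smul_eq_mul, one_apply_eq_δ, swapMatrix_apply]
  by_cases h : p = (r₁, r₂)
  · subst h
    by_cases hr : r₁ = r₂
    · subst hr
      rw [← apply_prodMap_of_commute_tensorSquare hX (Equiv.swap r₁ x)]
      simpa [δ] using apply_diag_of_commute_tensorSquare hX hxy
    · simp [(apply_eq_apply_of_commute_tensorSquare hX hxy hr).1, δ, hr]
  by_cases h' : p = (r₂, r₁)
  · subst h'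
    have hr : r₁ ≠ r₂ := by grind
    simp [(apply_eq_apply_of_commute_tensorSquare hX hxy hr).2, δ, hr.symm]
  · rw [apply_eq_zero_of_commute_tensorSquare hX h h']
    simp only [δ]
    grind

end Commutant

section SecondMoment

variable {μ : Measure (unitaryGroup ι ℂ)} [IsProbabilityMeasure μ]

theorem trace_mul_twirl_tensorSquare {C : Matrix (ι × ι) (ι × ι) ℂ}
    (hC : ∀ V, Commute (tensorSquare V) C) (X : Matrix (ι × ι) (ι × ι) ℂ) :
    (C * twirl μ tensorSquare X).trace = (C * X).trace :=
  map_mul_twirl_of_commute continuous_tensorSquare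
    (traceLinearMap (ι × ι) ℝ ℂ).toContinuousLinearMap trace_mul_comm hC X

theorem twirl_tensorSquare [Nontrivial ι] [μ.IsMulLeftInvariant] (X : Matrix (ι × ι) (ι × ι) ℂ) :
    twirl μ tensorSquare X = ((Fintype.card ι : ℂ) ^ 2 - 1)⁻¹ •
      ((X.trace - (swapMatrix ι * X).trace / Fintype.card ι) • 1 +
        ((swapMatrix ι * X).trace - X.trace / Fintype.card ι) • swapMatrix ι) := by
  -- The twirl is `a + b F`; its traces against `1` and `F` are those of `X`, which gives
  -- `a D² + b D = tr X` and `a D + b D² = tr (F X)`.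
  obtain ⟨a, b, hab⟩ := exists_eq_smul_one_add_smul_swapMatrix
    (commute_twirl (μ := μ) continuous_tensorSquare X)
  have trace_eq := trace_mul_twirl_tensorSquare (μ := μ) (fun V ↦ Commute.one_right _) X
  have trace_swap_eq := trace_mul_twirl_tensorSquare (μ := μ) commute_tensorSquare_swapMatrix X
  simp only [hab, one_mul, mul_add, mul_smul_comm, mul_one, swapMatrix_mul_self, trace_add,
    trace_smul, trace_one, trace_swapMatrix, Fintype.card_prod, Nat.cast_mul,
    smul_eq_mul] at trace_eq trace_swap_eq
  have card_ne_zero : (Fintype.card ι : ℂ) ≠ 0 := by simp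
  have card_sq_sub_one_ne_zero : (Fintype.card ι : ℂ) ^ 2 - 1 ≠ 0 := by
    rw [sub_ne_zero]
    exact_mod_cast (one_lt_pow₀ (Fintype.one_lt_card (α := ι)) two_ne_zero).ne'
  rw [hab, ← trace_eq, ← trace_swap_eq, smul_add, smul_smul, smul_smul]
  congr 2 <;> field_simp <;> ring

theorem tensorSquare_mul_single_mul_apply (V : unitaryGroup ι ℂ) (p q r s : ι × ι) :
    (tensorSquare V * single q s (1 : ℂ) * tensorSquare V⁻¹) p r =
      V p.1 q.1 * V p.2 q.2 * (starRingEnd ℂ) (V r.1 s.1) * (starRingEnd ℂ) (V r.2 s.2) := by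
  rw [mul_apply, Fintype.sum_eq_single s]
  · simp [tensorSquare_apply, mul_assoc]
  · intro t ht
    rw [mul_single_apply_of_ne _ _ _ _ _ ht, zero_mul]

theorem twirl_tensorSquare_single_apply (p q r s : ι × ι) :
    twirl μ tensorSquare (single q s (1 : ℂ)) p r = ∫ V : unitaryGroup ι ℂ,
      V p.1 q.1 * V p.2 q.2 * (starRingEnd ℂ) (V r.1 s.1) * (starRingEnd ℂ) (V r.2 s.2) ∂μ := by
  simp only [← tensorSquare_mul_single_mul_apply]
  exact ((entryLinearMap ℝ ℂ p r).toContinuousLinearMap.integral_comp_comm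
    (integrable_map_conj (μ := μ) continuous_tensorSquare (single q s (1 : ℂ)))).symm

/-- The family `V` is a unitary `t`-design: its `t`-th mixed moments are those of the measure `μ`,
meant to be the Haar probability measure. -/
def IsUnitaryDesign {κ : Type*} [Fintype κ] (t : ℕ) (μ : Measure (unitaryGroup ι ℂ))
    (V : κ → unitaryGroup ι ℂ) : Prop :=
  ∀ p q r s : Fin t → ι,
    (1 / Fintype.card κ : ℂ) * ∑ m, ∏ n, V m (p n) (q n) * (starRingEnd ℂ) (V m (r n) (s n)) =
      ∫ W : unitaryGroup ι ℂ, ∏ n, W (p n) (q n) * (starRingEnd ℂ) (W (r n) (s n)) ∂μ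

theorem IsUnitaryDesign.average_eq_twirl {κ : Type*} [Fintype κ] {V : κ → unitaryGroup ι ℂ}
    (hV : IsUnitaryDesign 2 μ V) (p q r s : ι × ι) :
    (1 / Fintype.card κ : ℂ) * ∑ m, V m p.1 q.1 * V m p.2 q.2 * (starRingEnd ℂ) (V m r.1 s.1) *
        (starRingEnd ℂ) (V m r.2 s.2) =
      twirl μ tensorSquare (single q s (1 : ℂ)) p r := by
  have moment_eq := hV ![p.1, p.2] ![q.1, q.2] ![r.1, r.2] ![s.1, s.2]
  simp only [Fin.prod_univ_two, cons_val_zero, cons_val_one, mul_mul_mul_comm] at moment_eq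
  simpa only [twirl_tensorSquare_single_apply, mul_assoc] using moment_eq

end SecondMoment

end TensorSquare

section EnvironmentTrace

variable {α β : Type*} [Fintype β]

/-- The partial trace over both copies of the environment `β` of an operator on two copies of
`ℂ^α ⊗ ℂ^β`. -/
def envTrace : Matrix ((α × β) × (α × β)) ((α × β) × (α × β)) ℂ →ₗ[ℂ] Matrix (α × α) (α × α) ℂ where
  toFun X := of fun i j ↦ ∑ l₁, ∑ l₂, X ((i.1, l₁), (i.2, l₂)) ((j.1, l₁), (j.2, l₂))
  map_add' X Y := by ext; simp [Finset.sum_add_distrib]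
  map_smul' c X := by ext; simp [Finset.mul_sum]

theorem envTrace_apply (X : Matrix ((α × β) × (α × β)) ((α × β) × (α × β)) ℂ) (i j : α × α) :
    envTrace X i j = ∑ l₁, ∑ l₂, X ((i.1, l₁), (i.2, l₂)) ((j.1, l₁), (j.2, l₂)) := rfl

variable [DecidableEq α] [DecidableEq β]

theorem envTrace_one :
    envTrace (1 : Matrix ((α × β) × (α × β)) _ ℂ) = (Fintype.card β : ℂ) ^ 2 • 1 := by
  ext i j
  simp only [envTrace_apply, Matrix.smul_apply, one_apply_eq_δ, δ_prodMk]
  simp [δ, sq]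

theorem envTrace_swapMatrix :
    envTrace (swapMatrix (α × β)) = (Fintype.card β : ℂ) • swapMatrix α := by
  ext i j
  simp only [envTrace_apply, Matrix.smul_apply, swapMatrix_apply, δ_prodMk]
  simp [δ]

end EnvironmentTrace

section ChannelDesign

open scoped Matrix.Norms.L2Operator

variable {α β κ : Type*} [Fintype α] [DecidableEq α] [Fintype β] [DecidableEq β] [Fintype κ]
  {μ : Measure (unitaryGroup (α × β) ℂ)} [IsProbabilityMeasure μ] {U : κ → unitaryGroup (α × β) ℂ}

theorem IsUnitaryDesign.choi_average_eq_envTrace_twirl (hU : IsUnitaryDesign 2 μ U) (e : β)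
    (a₁ a₂ b₁ b₂ i₁ i₂ j₁ j₂ : α) :
    (1 / Fintype.card κ : ℂ) * ∑ m, (1 / (Fintype.card α : ℂ) ^ 2) * ∑ l₁, ∑ l₂,
        U m (i₁, l₁) (a₁, e) * U m (i₂, l₂) (a₂, e) * (starRingEnd ℂ) (U m (j₁, l₁) (b₁, e)) *
          (starRingEnd ℂ) (U m (j₂, l₂) (b₂, e)) =
      1 / (Fintype.card α : ℂ) ^ 2 * envTrace (twirl μ tensorSquare
        (single ((a₁, e), (a₂, e)) ((b₁, e), (b₂, e)) (1 : ℂ))) (i₁, i₂) (j₁, j₂) := by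
  simp only [envTrace_apply, ← hU.average_eq_twirl, ← Finset.mul_sum]
  rw [mul_left_comm, Finset.sum_comm]
  simp only [Finset.sum_comm (s := (Finset.univ : Finset κ))]

theorem channel_design_of_unitary_two_design_general [Nontrivial (α × β)] [μ.IsMulLeftInvariant]
    (hU : IsUnitaryDesign 2 μ U) (e : β) (a₁ a₂ b₁ b₂ i₁ i₂ j₁ j₂ : α) :
    (1 / Fintype.card κ : ℂ) * ∑ m, (1 / (Fintype.card α : ℂ) ^ 2) * ∑ l₁, ∑ l₂,
        U m (i₁, l₁) (a₁, e) * U m (i₂, l₂) (a₂, e) * (starRingEnd ℂ) (U m (j₁, l₁) (b₁, e)) *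
          (starRingEnd ℂ) (U m (j₂, l₂) (b₂, e)) =
      ((Fintype.card β : ℂ) ^ 2 * (δ a₁ b₁ * δ a₂ b₂ * δ i₁ j₁ * δ i₂ j₂) +
          (Fintype.card β : ℂ) * (δ a₁ b₂ * δ a₂ b₁ * δ i₁ j₂ * δ i₂ j₁) -
          ((Fintype.card β : ℂ) ^ 2 / ((Fintype.card α : ℂ) * Fintype.card β)) *
            (δ a₁ b₂ * δ a₂ b₁ * δ i₁ j₁ * δ i₂ j₂) -
          ((Fintype.card β : ℂ) / ((Fintype.card α : ℂ) * Fintype.card β)) *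
            (δ a₁ b₁ * δ a₂ b₂ * δ i₁ j₂ * δ i₂ j₁)) /
        ((Fintype.card α : ℂ) ^ 2 * (((Fintype.card α : ℂ) * Fintype.card β) ^ 2 - 1)) := by
  rw [hU.choi_average_eq_envTrace_twirl, twirl_tensorSquare, trace_single_eq_δ,
    trace_swapMatrix_mul_single]
  simp only [map_smul, map_add, envTrace_one, envTrace_swapMatrix, Matrix.smul_apply,
    Matrix.add_apply, smul_eq_mul, one_apply_eq_δ, swapMatrix_apply, Fintype.card_prod,
    Nat.cast_mul, δ_prodMk, δ_self, div_mul_eq_div_div]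
  ring

end ChannelDesign

/-- A unitary `2`-design in `U(dk)` induces a channel `[2,k]`-design: the
two-copy Choi average of the induced channels equals the Haar two-copy Choi average. -/
theorem channel_design_of_unitary_two_design
    (d k M : ℕ) (hd : 1 ≤ d) (hk : 1 ≤ k) (hD : 2 ≤ d * k) (hM : 1 ≤ M)
    (μ : Measure (Matrix.unitaryGroup (Fin d × Fin k) ℂ)) [μ.IsHaarMeasure]
    [IsProbabilityMeasure μ]
    (U : Fin M → Matrix.unitaryGroup (Fin d × Fin k) ℂ)
    (hU : ∀ p q r s : Fin 2 → (Fin d × Fin k),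
      (1 / M : ℂ) * ∑ m, ∏ n, U m (p n) (q n) * (starRingEnd ℂ) (U m (r n) (s n)) =
        ∫ V : Matrix.unitaryGroup (Fin d × Fin k) ℂ,
          ∏ n, V (p n) (q n) * (starRingEnd ℂ) (V (r n) (s n)) ∂μ)
    (a₁ a₂ b₁ b₂ i₁ i₂ j₁ j₂ : Fin d) :
    (1 / M : ℂ) * ∑ m, (1 / (d : ℂ) ^ 2) * ∑ l₁ : Fin k, ∑ l₂ : Fin k,
        U m (i₁, l₁) (a₁, (⟨0, hk⟩ : Fin k)) * U m (i₂, l₂) (a₂, (⟨0, hk⟩ : Fin k)) *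
          (starRingEnd ℂ) (U m (j₁, l₁) (b₁, (⟨0, hk⟩ : Fin k))) *
          (starRingEnd ℂ) (U m (j₂, l₂) (b₂, (⟨0, hk⟩ : Fin k))) =
      ((k : ℂ) ^ 2 * (δ a₁ b₁ * δ a₂ b₂ * δ i₁ j₁ * δ i₂ j₂) +
          (k : ℂ) * (δ a₁ b₂ * δ a₂ b₁ * δ i₁ j₂ * δ i₂ j₁) -
          ((k : ℂ) ^ 2 / ((d : ℂ) * k)) * (δ a₁ b₂ * δ a₂ b₁ * δ i₁ j₁ * δ i₂ j₂) -
          ((k : ℂ) / ((d : ℂ) * k)) * (δ a₁ b₁ * δ a₂ b₂ * δ i₁ j₂ * δ i₂ j₁)) /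
        ((d : ℂ) ^ 2 * (((d : ℂ) * k) ^ 2 - 1)) := by
  have : Nontrivial (Fin d × Fin k) :=
    Fintype.one_lt_card_iff_nontrivial.mp (by simpa using Nat.lt_of_succ_le hD)
  have hU' : IsUnitaryDesign 2 μ U := by simpa only [IsUnitaryDesign, Fintype.card_fin] using hU
  simpa only [Fintype.card_fin] using
    channel_design_of_unitary_two_design_general hU' ⟨0, hk⟩ a₁ a₂ b₁ b₂ i₁ i₂ j₁ j₂
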